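/- (Existence of a symmetric equilibrium of the tournament auction.) If in addition g is continuously differentiable on [0,w̄], then there exists a strictly increasing continuous function b : [0,v̄] → [0,w̄] with b(0) = 0 and b(v) > v for all v ∈ (0,v̄], such that for every v ∈ [0,v̄] and every β ≥ 0, F(v)^{N−1}·∫₀^{b(v)} (v−ξ)g(ξ)dξ ≥ W(β)·∫₀^{min(β,w̄)} (v−ξ)g(ξ)dξ, where W(β) = F(b⁻¹(β))^{N−1} for β ∈ [0, b(v̄)] (b⁻¹ denoting the inverse of b) and W(β) = 1 for β > b(v̄). That is, when the other N−1 first-stage bidders bid according to b and the strong bidder bids his value, bidding b(v) is optimal among all bids for a first-stage bidder with value v. -/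

import Mathlib

/-!
Write `H = F ^ (N - 1)`, `G b = ∫₀ᵇ g`, and `U v b = ∫₀ᵇ (v - ξ) g ξ dξ` for the second-stage payoff.
Instead of the first-order condition for `b`, which is singular both at `v = 0` and at `b = v`, the
proof solves the envelope equation for the equilibrium payoff `P v = H v * U v (b v)`, namely
`P' = H * G ∘ b` with `P 0 = 0`. Since `U v` strictly decreases on `[v, w̄]`, the bid `b v ≥ v` is
determined by `v` and `P v`; once `P v` is clipped to `[0, H v * U v v]`, the right-hand side
becomes a bounded continuous function `K v (P v)`. It is not Lipschitz in `P`, but it is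
antitone, because a larger payoff means a smaller bid, and this is enough for existence
(`exists_solution_of_antitone`): averaging `K` in `P` gives Lipschitz fields whose Picard-Lindelöf
solutions are uniformly Cauchy by comparison.

The clipping is never active. Indeed `P > 0` for `v > 0`, and at a point with
`P ≥ R := H * U v v` one would have `b v = v`, hence `P' - R' = -H' * U v v < 0`, which rules out a
nonnegative maximum of `P - R` at a positive time. So `v < b v`. If `b` failed to increase strictly
it would have a maximum `z` over some `[z, y]` with `z < y`; just after `z` the payoff `P` would
then grow at rate at most `H s * G (b z)` while winning becomes strictly more likely, a
contradiction. Finally the payoff from mimicking `x` is `H x * U v (b x) = P x + (v - x) * P' x`, and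
`P' = H * G ∘ b` is increasing, so `P` is convex and lies above this tangent
(`exists_equilibrium_bid`). A bid above `b v̄` only raises the expected price. The values in
`[0, w̄]` are bounded by the hypothesis on the mean, which says `U v w̄ ≤ 0` for `v ≤ v̄`.
-/

open MeasureTheory intervalIntegral Set Filter
open scoped Topology

/-! ### Scalar differential equations with an antitone right-hand side -/

theorem exists_solution_of_lipschitz {T C L : ℝ} (hT : 0 < T) {K : ℝ → ℝ → ℝ}
    (hK : Continuous fun p : ℝ × ℝ => K p.1 p.2) (hC : ∀ t x, |K t x| ≤ C)
    (hL0 : 0 ≤ L) (hL : ∀ t x y, |K t x - K t y| ≤ L * |x - y|) :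
    ∃ y : ℝ → ℝ, y 0 = 0 ∧
      ∀ t ∈ Icc 0 T, HasDerivWithinAt y (K t (y t)) (Icc 0 T) t := by
  have hC0 : 0 ≤ C := (abs_nonneg _).trans (hC 0 0)
  have hPL : IsPicardLindelof K (tmin := 0) (tmax := T) ⟨0, le_rfl, hT.le⟩ (0 : ℝ)
      (⟨C * T, by positivity⟩) 0 ⟨C, hC0⟩ ⟨L, hL0⟩ := by
    refine ⟨fun t _ => ?_, fun x _ => ?_, fun t _ x _ => ?_, ?_⟩
    · refine LipschitzOnWith.of_dist_le_mul fun x _ y _ => ?_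
      rw [Real.dist_eq, Real.dist_eq]
      exact hL t x y
    · exact (hK.comp (by fun_prop : Continuous fun t : ℝ => (t, x))).continuousOn
    · rw [Real.norm_eq_abs]
      exact hC t x
    · change C * max (T - 0) (0 - 0) ≤ C * T - 0
      simp [hT.le]
  obtain ⟨y, hy0, hy⟩ := hPL.exists_eq_forall_mem_Icc_hasDerivWithinAt₀
  exact ⟨y, hy0, hy⟩

/-- The average of `K t` over `[x, x + δ]`. -/
noncomputable def fwdAvg (K : ℝ → ℝ → ℝ) (δ t x : ℝ) : ℝ := ∫ s in (0 : ℝ)..1, K t (x + δ * s)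

section avg
variable {K : ℝ → ℝ → ℝ} {C δ : ℝ}

theorem continuous_fwdAvg (hK : Continuous fun p : ℝ × ℝ => K p.1 p.2) :
    Continuous fun p : ℝ × ℝ => fwdAvg K δ p.1 p.2 := by
  unfold fwdAvg
  refine continuous_parametric_intervalIntegral_of_continuous'
    (f := fun (p : ℝ × ℝ) s => K p.1 (p.2 + δ * s)) ?_ 0 1
  exact hK.comp (by fun_prop : Continuous fun q : (ℝ × ℝ) × ℝ => (q.1.1, q.1.2 + δ * q.2))

theorem continuous_slice (hK : Continuous fun p : ℝ × ℝ => K p.1 p.2) (t : ℝ) :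
    Continuous (K t) :=
  hK.comp (by fun_prop : Continuous fun x : ℝ => (t, x))

theorem fwdAvg_le (hK : Continuous fun p : ℝ × ℝ => K p.1 p.2) (hanti : ∀ t, Antitone (K t))
    (hδ : 0 < δ) (t x : ℝ) : fwdAvg K δ t x ≤ K t x := by
  have hc := continuous_slice hK t
  have h := integral_mono_on (μ := volume) (a := 0) (b := 1) (f := fun s => K t (x + δ * s))
    (g := fun _ => K t x) zero_le_one
    ((by fun_prop : Continuous fun s => K t (x + δ * s)).intervalIntegrable _ _) (by simp)
    (fun s hs => hanti t (by nlinarith [hs.1]))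
  simpa [fwdAvg] using h

theorem le_fwdAvg (hK : Continuous fun p : ℝ × ℝ => K p.1 p.2) (hanti : ∀ t, Antitone (K t))
    (hδ : 0 < δ) (t x : ℝ) : K t (x + δ) ≤ fwdAvg K δ t x := by
  have hc := continuous_slice hK t
  have h := integral_mono_on (μ := volume) (a := 0) (b := 1) (f := fun _ => K t (x + δ))
    (g := fun s => K t (x + δ * s)) zero_le_one (by simp)
    ((by fun_prop : Continuous fun s => K t (x + δ * s)).intervalIntegrable _ _)
    (fun s hs => hanti t (by nlinarith [hs.2]))
  simpa [fwdAvg] using h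

theorem abs_fwdAvg_le (hC : ∀ t x, |K t x| ≤ C) (t x : ℝ) : |fwdAvg K δ t x| ≤ C := by
  have h := norm_integral_le_of_norm_le_const (a := (0 : ℝ)) (b := 1) (C := C)
    (f := fun s => K t (x + δ * s)) (fun s _ => by simpa using hC t _)
  simpa [fwdAvg] using h

theorem fwdAvg_lipschitz (hK : Continuous fun p : ℝ × ℝ => K p.1 p.2) (hC : ∀ t x, |K t x| ≤ C)
    (hδ : 0 < δ) (t x y : ℝ) :
    |fwdAvg K δ t x - fwdAvg K δ t y| ≤ 2 * C / δ * |x - y| := by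
  have hc := continuous_slice hK t
  have hi : ∀ a b, IntervalIntegrable (K t) volume a b := fun a b => hc.intervalIntegrable a b
  have hav : ∀ z, fwdAvg K δ t z = δ⁻¹ * ∫ u in z..z + δ, K t u := fun z => by
    rw [fwdAvg, integral_comp_add_mul (K t) hδ.ne']
    simp
  have hb : ∀ a b, |∫ u in a..b, K t u| ≤ C * |b - a| := fun a b => by
    simpa using norm_integral_le_of_norm_le_const (a := a) (b := b) (C := C)
      (f := K t) (fun s _ => by simpa using hC t s)
  have hsplit : (∫ u in x..x + δ, K t u) - ∫ u in y..y + δ, K t u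
      = (∫ u in x..y, K t u) + ∫ u in y + δ..x + δ, K t u := by
    rw [← integral_add_adjacent_intervals (hi x y) (hi y (x + δ)),
      ← integral_add_adjacent_intervals (hi y (y + δ)) (hi (y + δ) (x + δ))]
    ring
  have h1 := hb x y
  have h2 := hb (y + δ) (x + δ)
  rw [add_sub_add_right_eq_sub] at h2
  rw [abs_sub_comm y x] at h1
  rw [hav, hav, ← mul_sub, hsplit, abs_mul, abs_of_pos (inv_pos.2 hδ)]
  calc δ⁻¹ * |(∫ u in x..y, K t u) + ∫ u in y + δ..x + δ, K t u|
      ≤ δ⁻¹ * (C * |x - y| + C * |x - y|) := by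
        gcongr
        exact (abs_add_le _ _).trans (add_le_add h1 h2)
    _ = 2 * C / δ * |x - y| := by ring

end avg

/-- Comparison of the solutions for two averaging scales: since
`K t (x + δ) ≤ fwdAvg K δ t x ≤ K t x` and `K t` is antitone, `y` cannot cross `z + ε` upwards. -/
theorem approx_le {T δ ε : ℝ} {K : ℝ → ℝ → ℝ}
    (hK : Continuous fun p : ℝ × ℝ => K p.1 p.2) (hanti : ∀ t, Antitone (K t))
    (hδ : 0 < δ) (hε : 0 < ε) {y z : ℝ → ℝ} (hy0 : y 0 = 0) (hz0 : z 0 = 0)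
    (hy : ∀ t ∈ Icc 0 T, HasDerivWithinAt y (fwdAvg K δ t (y t)) (Icc 0 T) t)
    (hz : ∀ t ∈ Icc 0 T, HasDerivWithinAt z (fwdAvg K ε t (z t)) (Icc 0 T) t)
    {t : ℝ} (ht : t ∈ Icc 0 T) : y t ≤ z t + ε := by
  have hIci : ∀ {u : ℝ → ℝ} {u' : ℝ} {t : ℝ}, t ∈ Ico 0 T →
      HasDerivWithinAt u u' (Icc 0 T) t → HasDerivWithinAt u u' (Ici t) t := by
    intro u u' t ht h
    exact (h.mono (Icc_subset_Icc_left ht.1)).mono_of_mem_nhdsWithin (Icc_mem_nhdsGE ht.2)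
  -- the fencing theorem needs a strict inequality of derivatives, hence the slack `η * (1 + t)`
  have key : ∀ η > 0, y t ≤ z t + ε + η * (1 + t) := by
    intro η hη
    refine image_le_of_deriv_right_lt_deriv_boundary' (f := y) (a := 0) (b := T)
      (f' := fun t => fwdAvg K δ t (y t)) (B := fun t => z t + ε + η * (1 + t))
      (B' := fun t => fwdAvg K ε t (z t) + η)
      (fun t ht => (hy t ht).continuousWithinAt)
      (fun t ht => hIci ht (hy t (Ico_subset_Icc_self ht))) ?_ ?_ ?_ ?_ ht
    · simp only [hy0, hz0]; linarith
    · have : ContinuousOn z (Icc 0 T) := fun t ht => (hz t ht).continuousWithinAt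
      fun_prop
    · intro t ht
      have h2 : HasDerivWithinAt (fun t : ℝ => η * (1 + t)) (η * 1) (Ici t) t :=
        ((hasDerivWithinAt_id t _).const_add 1).const_mul η
      rw [mul_one] at h2
      exact ((hIci ht (hz t (Ico_subset_Icc_self ht))).add_const ε).add h2
    · intro s hs hs'
      have hge : z s + ε ≤ y s := by
        rw [hs']; nlinarith [hs.1]
      calc fwdAvg K δ s (y s) ≤ K s (y s) := fwdAvg_le hK hanti hδ _ _
        _ ≤ K s (z s + ε) := hanti s hge
        _ ≤ fwdAvg K ε s (z s) := le_fwdAvg hK hanti hε _ _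
        _ < _ := by linarith
  refine le_of_forall_pos_le_add fun η hη => ?_
  have h1 : 0 < 1 + t := by linarith [ht.1]
  have := key (η / (1 + t)) (by positivity)
  rwa [div_mul_cancel₀ _ h1.ne'] at this

/-- A Peano-type existence theorem on a prescribed interval `[0, T]`, for a bounded continuous field
which is antitone in the unknown. The derivative is two-sided, also at the endpoints. -/
theorem exists_solution_of_antitone {T C : ℝ} (hT : 0 < T) {K : ℝ → ℝ → ℝ}
    (hK : Continuous fun p : ℝ × ℝ => K p.1 p.2) (hC : ∀ t x, |K t x| ≤ C)
    (hanti : ∀ t, Antitone (K t)) :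
    ∃ y : ℝ → ℝ, y 0 = 0 ∧ ∀ t ∈ Icc 0 T, HasDerivAt y (K t (y t)) t := by
  have hC0 : 0 ≤ C := (abs_nonneg _).trans (hC 0 0)
  have hδ : ∀ n : ℕ, (0 : ℝ) < 1 / ((n : ℝ) + 1) := fun n => Nat.one_div_pos_of_nat
  have hδ0 := tendsto_one_div_add_atTop_nhds_zero_nat (𝕜 := ℝ)
  choose Y hY0 hY using fun n : ℕ => exists_solution_of_lipschitz (L := 2 * C / (1 / ((n : ℝ) + 1)))
    hT (continuous_fwdAvg (δ := 1 / ((n : ℝ) + 1)) hK) (abs_fwdAvg_le hC) (by positivity)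
    (fwdAvg_lipschitz hK hC (hδ n))
  have hle : ∀ n m, ∀ t ∈ Icc 0 T, Y n t ≤ Y m t + 1 / ((m : ℝ) + 1) := fun n m t ht =>
    approx_le hK hanti (hδ n) (hδ m) (hY0 n) (hY0 m) (hY n) (hY m) ht
  have hYc : ∀ n, ContinuousOn (Y n) (Icc 0 T) := fun n t ht => (hY n t ht).continuousWithinAt
  have hcauchy : UniformCauchySeqOn Y atTop (Icc 0 T) := by
    rw [Metric.uniformCauchySeqOn_iff]
    intro ε hε
    obtain ⟨N, hN⟩ := (hδ0.eventually (gt_mem_nhds hε)).exists_forall_of_atTop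
    refine ⟨N, fun m hm n hn t ht => ?_⟩
    rw [Real.dist_eq, abs_lt]
    constructor <;> linarith [hle n m t ht, hle m n t ht, hN m hm, hN n hn]
  have hlim : ∀ t : ℝ, ∃ l, t ∈ Icc 0 T → Tendsto (fun n => Y n t) atTop (𝓝 l) := fun t => by
    by_cases ht : t ∈ Icc 0 T
    · obtain ⟨l, hl⟩ := cauchySeq_tendsto_of_complete (hcauchy.cauchySeq ht)
      exact ⟨l, fun _ => hl⟩
    · exact ⟨0, fun h => absurd h ht⟩
  choose z hz using hlim
  have hzc : ContinuousOn z (Icc 0 T) :=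
    (hcauchy.tendstoUniformlyOn_of_tendsto fun t ht => hz t ht).continuousOn
      (Frequently.of_forall hYc)
  -- the integrand of the limiting integral equation, continued continuously to all times
  set k : ℝ → ℝ := IccExtend hT.le ((Icc 0 T).domRestrict fun s => K s (z s)) with hk
  have hkc : Continuous k := by
    have : ContinuousOn (fun s => K s (z s)) (Icc 0 T) :=
      hK.comp_continuousOn (continuousOn_id.prodMk hzc)
    exact this.domRestrict.Icc_extend'
  have hk_eq : ∀ s ∈ Icc 0 T, k s = K s (z s) := fun s hs => by
    rw [hk, IccExtend_of_mem _ _ hs]; rfl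
  -- dominated convergence in the integral equations of the approximations
  have hint : ∀ t ∈ Icc 0 T, z t = ∫ s in (0 : ℝ)..t, k s := by
    intro t ht
    have hsub : uIoc 0 t ⊆ Icc 0 T := by
      rw [uIoc_of_le ht.1]
      exact fun s hs => ⟨hs.1.le, hs.2.trans ht.2⟩
    have hcn : ∀ n : ℕ, ContinuousOn (fun s => fwdAvg K (1 / ((n : ℝ) + 1)) s (Y n s)) (Icc 0 T) :=
      fun (n : ℕ) => (continuous_fwdAvg hK).comp_continuousOn (continuousOn_id.prodMk (hYc n))
    have hsub' : uIcc 0 t ⊆ Icc 0 T := by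
      rw [uIcc_of_le ht.1]
      exact Icc_subset_Icc_right ht.2
    have hn : ∀ n : ℕ, ∫ s in (0 : ℝ)..t, fwdAvg K (1 / ((n : ℝ) + 1)) s (Y n s) = Y n t := fun n => by
      have := integral_eq_sub_of_hasDeriv_right_of_le (f := Y n) ht.1
        ((hYc n).mono (Icc_subset_Icc_right ht.2))
        (fun s hs => (((hY n s ⟨hs.1.le, hs.2.le.trans ht.2⟩).mono
          (Icc_subset_Icc_left hs.1.le)).mono_of_mem_nhdsWithin
            (Icc_mem_nhdsGT_of_mem ⟨le_rfl, hs.2.trans_le ht.2⟩)))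
        (((hcn n).mono hsub').intervalIntegrable)
      rw [this, hY0, sub_zero]
    refine tendsto_nhds_unique (hz t ht) ?_
    simp_rw [← hn]
    refine intervalIntegral.tendsto_integral_filter_of_dominated_convergence (fun _ => C)
      (Eventually.of_forall fun n =>
        ((hcn n).mono hsub).aestronglyMeasurable measurableSet_uIoc)
      (Eventually.of_forall fun n => ae_of_all _ fun s _ => by simpa using abs_fwdAvg_le hC _ _)
      (by simp) (ae_of_all _ fun s hs => ?_)
    rw [hk_eq s (hsub hs)]
    have hc := continuous_slice hK s
    have hYs := hz s (hsub hs)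
    have hup := (hc.tendsto _).comp hYs
    have hlow := (hc.tendsto _).comp (hYs.add hδ0)
    rw [add_zero] at hlow
    exact tendsto_of_tendsto_of_tendsto_of_le_of_le hlow hup
      (fun n => le_fwdAvg hK hanti (hδ n) _ _) (fun n => fwdAvg_le hK hanti (hδ n) _ _)
  refine ⟨fun t => ∫ s in (0 : ℝ)..t, k s, by simp, fun t ht => ?_⟩
  have := (hkc.integral_hasStrictDerivAt 0 t).hasDerivAt
  rw [hk_eq t ht, hint t ht] at this
  exact this

/-! ### The second-stage payoff -/

/-- `∫₀ᵇ g`, the probability of beating the strong bidder with the bid `b`. -/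
noncomputable def mass (g : ℝ → ℝ) (b : ℝ) : ℝ := ∫ ξ in (0 : ℝ)..b, g ξ

/-- The expected payoff in the second stage of a bidder with value `t` who bids `b` there. -/
noncomputable def surplus (g : ℝ → ℝ) (t b : ℝ) : ℝ := ∫ ξ in (0 : ℝ)..b, (t - ξ) * g ξ

section surplus
variable {g : ℝ → ℝ}

theorem hasDerivAt_mass (hg : Continuous g) (b : ℝ) : HasDerivAt (mass g) (g b) b :=
  (hg.integral_hasStrictDerivAt 0 b).hasDerivAt

theorem continuous_mass (hg : Continuous g) : Continuous (mass g) :=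
  continuous_iff_continuousAt.2 fun b => (hasDerivAt_mass hg b).continuousAt

theorem strictMono_mass (hg : Continuous g) (hpos : ∀ x, 0 < g x) : StrictMono (mass g) :=
  strictMono_of_hasDerivAt_pos (hasDerivAt_mass hg) hpos

@[simp] theorem mass_zero : mass g 0 = 0 := by simp [mass]

@[simp] theorem surplus_zero_right (t : ℝ) : surplus g t 0 = 0 := by simp [surplus]

theorem surplus_eq (hg : Continuous g) (t b : ℝ) :
    surplus g t b = t * mass g b - mass (fun ξ => ξ * g ξ) b := by
  rw [surplus, mass, mass, ← intervalIntegral.integral_const_mul, ← intervalIntegral.integral_sub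
    ((by fun_prop : Continuous fun ξ => t * g ξ).intervalIntegrable _ _)
    ((by fun_prop : Continuous fun ξ => ξ * g ξ).intervalIntegrable _ _)]
  simp_rw [sub_mul]

theorem continuous_surplus (hg : Continuous g) :
    Continuous fun p : ℝ × ℝ => surplus g p.1 p.2 := by
  simp_rw [surplus_eq hg]
  have h1 := continuous_mass hg
  have h2 := continuous_mass (g := fun ξ => ξ * g ξ) (by fun_prop)
  fun_prop

theorem surplus_sub (hg : Continuous g) (s t b : ℝ) :
    surplus g t b = surplus g s b + (t - s) * mass g b := by
  rw [surplus_eq hg, surplus_eq hg]; ring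

theorem hasDerivAt_surplus_diag (hg : Continuous g) (t : ℝ) :
    HasDerivAt (fun t => surplus g t t) (mass g t) t := by
  simp_rw [surplus_eq hg]
  have h1 := hasDerivAt_mass hg t
  have h2 := hasDerivAt_mass (g := fun ξ => ξ * g ξ) (by fun_prop) t
  have := ((hasDerivAt_id t).mul h1).sub h2
  simp only [id, one_mul, add_sub_cancel_right] at this
  exact this

/-- Bidding further above one's value adds only wins at a loss. -/
theorem surplus_strictAntiOn (hg : Continuous g) (hpos : ∀ x, 0 < g x) (t : ℝ) :
    StrictAntiOn (surplus g t) (Ici t) := by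
  have hd : ∀ b, HasDerivAt (surplus g t) ((t - b) * g b) b := fun b =>
    ((by fun_prop : Continuous fun ξ => (t - ξ) * g ξ).integral_hasStrictDerivAt 0 b).hasDerivAt
  refine strictAntiOn_of_deriv_neg (convex_Ici t)
    (fun b _ => (hd b).continuousAt.continuousWithinAt) fun b hb => ?_
  rw [interior_Ici] at hb
  rw [(hd b).deriv]
  exact mul_neg_of_neg_of_pos (sub_neg.2 hb) (hpos b)

theorem surplus_diag_pos (hg : Continuous g) (hpos : ∀ x, 0 < g x) {t : ℝ} (ht : 0 < t) :
    0 < surplus g t t := by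
  have := strictMonoOn_of_deriv_pos (convex_Ici 0) (f := fun t => surplus g t t)
    (fun t _ => (hasDerivAt_surplus_diag hg t).continuousAt.continuousWithinAt) (fun t ht => by
      rw [interior_Ici] at ht
      rw [(hasDerivAt_surplus_diag hg t).deriv, ← mass_zero (g := g)]
      exact strictMono_mass hg hpos ht)
  simpa using this self_mem_Ici ht.le ht

end surplus

/-! ### The equilibrium bid -/

/-- A function is continuous if it is given by a continuous expression in a compactly-valued
unknown `y` which solves a closed system of constraints, as long as the value of the expression
does not depend on the solution chosen. -/
theorem continuous_of_closed_selection {X Z : Type*} [TopologicalSpace X] [TopologicalSpace Z]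
    {w : ℝ} {R : Set (X × ℝ)} (hR : IsClosed R) {h : X × ℝ → Z} (hh : Continuous h) {k : X → Z}
    (hex : ∀ x, ∃ y ∈ Icc 0 w, (x, y) ∈ R)
    (hk : ∀ x, ∀ y ∈ Icc 0 w, (x, y) ∈ R → k x = h (x, y)) : Continuous k := by
  refine continuous_iff_isClosed.2 fun C hC => ?_
  have hi : Continuous fun q : X × Icc (0 : ℝ) w => (q.1, (q.2 : ℝ)) := by fun_prop
  have hcl := isClosedMap_fst_of_compactSpace _
    ((hR.preimage hi).inter (hC.preimage (hh.comp hi)))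
  convert hcl using 1
  ext x
  constructor
  · intro hx
    obtain ⟨y, hy, hxy⟩ := hex x
    refine ⟨(x, ⟨y, hy⟩), ⟨hxy, ?_⟩, rfl⟩
    change h (x, y) ∈ C
    rwa [← hk x y hy hxy]
  · rintro ⟨⟨x, y, hy⟩, ⟨hxy, hxC⟩, rfl⟩
    change k x ∈ C
    rw [hk x y hy hxy]
    exact hxC

/-- The derivative at a maximum from the left is nonnegative. -/
theorem false_of_left_max_of_deriv_neg {D : ℝ → ℝ} {d z : ℝ} (hz : 0 < z)
    (hD : HasDerivAt D d z) (hd : d < 0) (hmax : ∀ s ∈ Icc 0 z, D s ≤ D z) : False := by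
  have h1 := (hasDerivAt_iff_tendsto_slope.1 hD).mono_left (nhdsLT_le_nhdsNE z)
  obtain ⟨s, hs, hs'⟩ := ((h1.eventually (gt_mem_nhds hd)).and (Ioo_mem_nhdsLT hz)).exists
  rw [slope_def_field] at hs
  exact hs.not_ge (div_nonneg_of_nonpos (sub_nonpos.2 (hmax s ⟨hs'.1.le, hs'.2.le⟩))
    (sub_nonpos.2 hs'.2.le))

/-- The equilibrium bid when the first stage is won with probability `H`: the bids `b x` are those
a bidder of value `v` can choose between by mimicking the value `x`, and `x = v` is the best. -/
theorem exists_equilibrium_bid {w T : ℝ} (hT : 0 < T) (hTw : T ≤ w) {g : ℝ → ℝ}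
    (hg : Continuous g) (hpos : ∀ x, 0 < g x) (hU : ∀ t ∈ Icc 0 T, surplus g t w ≤ 0)
    {H H' : ℝ → ℝ} (hH : ∀ t, HasDerivAt H (H' t) t) (hH0 : H 0 = 0)
    (hH' : ∀ t ∈ Ioc 0 T, 0 < H' t) :
    ∃ b : ℝ → ℝ, StrictMonoOn b (Icc 0 T) ∧ ContinuousOn b (Icc 0 T) ∧ b 0 = 0 ∧
      (∀ v ∈ Icc 0 T, b v ∈ Icc 0 w) ∧ (∀ v ∈ Ioc 0 T, v < b v) ∧
      ∀ v ∈ Icc 0 T, ∀ x ∈ Icc 0 T, H x * surplus g v (b x) ≤ H v * surplus g v (b v) := by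
  have hHc : Continuous H := continuous_iff_continuousAt.2 fun t => (hH t).continuousAt
  have hHmono : StrictMonoOn H (Icc 0 T) :=
    strictMonoOn_of_deriv_pos (convex_Icc 0 T) hHc.continuousOn fun t ht => by
      rw [interior_Icc] at ht
      rw [(hH t).deriv]
      exact hH' t ⟨ht.1, ht.2.le⟩
  have h0T : (0 : ℝ) ∈ Icc 0 T := ⟨le_rfl, hT.le⟩
  have hHpos : ∀ t ∈ Ioc 0 T, 0 < H t := fun t ht => by
    have := hHmono h0T (Ioc_subset_Icc_self ht) ht.1
    rwa [hH0] at this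
  have hHnn : ∀ t ∈ Icc 0 T, 0 ≤ H t := fun t ht => by
    have := hHmono.monotoneOn h0T ht ht.1
    rwa [hH0] at this
  have hGmono := strictMono_mass hg hpos
  have hGc := continuous_mass hg
  have hGpos : ∀ b, 0 < b → 0 < mass g b := fun b hb => by
    have := hGmono hb
    rwa [mass_zero] at this
  have hGnn : ∀ b, 0 ≤ b → 0 ≤ mass g b := fun b hb => by
    have := hGmono.monotone hb
    rwa [mass_zero] at this
  have hUc := continuous_surplus hg
  have hUanti := surplus_strictAntiOn hg hpos
  have hUdiag : ∀ t, 0 ≤ t → 0 ≤ surplus g t t := fun t ht => by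
    rcases ht.eq_or_lt with rfl | h
    · simp
    · exact (surplus_diag_pos hg hpos h).le
  -- at `t = 0` the constraint `0 ≤ surplus g t y` alone forces `y = 0`
  have hcmp : ∀ t ∈ Icc 0 T, ∀ y y', t ≤ y → t ≤ y' → 0 ≤ surplus g t y' →
      H t * surplus g t y ≤ H t * surplus g t y' → y' ≤ y := by
    intro t ht y y' hy hy' hs' hle
    by_contra! hlt
    have h1 := hUanti t hy hy' hlt
    rcases ht.1.eq_or_lt with rfl | h0
    · have h2 := (hUanti 0).antitoneOn self_mem_Ici hy hy
      rw [surplus_zero_right] at h2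
      linarith
    · exact absurd (lt_of_mul_lt_mul_left (hle.trans_lt'
        (mul_lt_mul_of_pos_left h1 (hHpos t ⟨h0, ht.2⟩))) (hHnn t ht)) (lt_irrefl _)
  have huniq : ∀ t ∈ Icc 0 T, ∀ y y', t ≤ y → t ≤ y' → 0 ≤ surplus g t y → 0 ≤ surplus g t y' →
      H t * surplus g t y = H t * surplus g t y' → y = y' :=
    fun t ht y y' hy hy' hs hs' he =>
      le_antisymm (hcmp t ht y' y hy' hy hs he.ge) (hcmp t ht y y' hy hy' hs' he.le)
  -- `c` is the projection to `[0, T]`, `clip t` the projection to `[0, H t * surplus g t t]`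
  set c : ℝ → ℝ := fun t => max 0 (min t T) with hc
  have hcc : Continuous c := by fun_prop
  have hcmem : ∀ t, c t ∈ Icc 0 T := fun t =>
    ⟨le_max_left _ _, max_le hT.le (min_le_right _ _)⟩
  have hcid : ∀ t ∈ Icc 0 T, c t = t := fun t ht => by
    simp [hc, min_eq_left ht.2, ht.1]
  set clip : ℝ → ℝ → ℝ := fun t x => max 0 (min x (H t * surplus g t t)) with hclip
  have hRnn : ∀ t ∈ Icc 0 T, 0 ≤ H t * surplus g t t := fun t ht =>
    mul_nonneg (hHnn t ht) (hUdiag t ht.1)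
  have hsel : ∀ t x, ∃ y, y ∈ Icc 0 w ∧ c t ≤ y ∧ 0 ≤ surplus g (c t) y ∧
      H (c t) * surplus g (c t) y = clip (c t) x := by
    intro t x
    have hct := hcmem t
    generalize c t = t at hct
    have hcl0 : 0 ≤ clip t x := le_max_left _ _
    have hcl1 : clip t x ≤ H t * surplus g t t := max_le (hRnn t hct) (min_le_right _ _)
    rcases hct.1.eq_or_lt with rfl | h0
    · refine ⟨0, ⟨le_rfl, hT.le.trans hTw⟩, le_rfl, by simp, ?_⟩
      rw [hH0, zero_mul] at hcl1 ⊢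
      exact le_antisymm hcl0 hcl1
    · have hHt := hHpos t ⟨h0, hct.2⟩
      have htw := hct.2.trans hTw
      have hcont : ContinuousOn (surplus g t) (Icc t w) :=
        (hUc.comp (by fun_prop : Continuous fun y : ℝ => (t, y))).continuousOn
      obtain ⟨y, hy, hyu⟩ := intermediate_value_Icc' htw hcont
        (show clip t x / H t ∈ Icc (surplus g t w) (surplus g t t) from
          ⟨(hU t hct).trans (by positivity), by rwa [div_le_iff₀' hHt]⟩)
      refine ⟨y, ⟨h0.le.trans hy.1, hy.2⟩, hy.1, ?_, ?_⟩
      · rw [hyu]; positivity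
      · rw [hyu]; field_simp
  -- `Y t x` is the bid above the value `t` which yields the (clipped) overall payoff `x`
  choose Y hYw hYt hYs hYe using hsel
  set K : ℝ → ℝ → ℝ := fun t x => H (c t) * mass g (Y t x) with hKdef
  have hKc : Continuous fun p : ℝ × ℝ => K p.1 p.2 := by
    refine continuous_of_closed_selection (w := w)
      (R := {q : (ℝ × ℝ) × ℝ | c q.1.1 ≤ q.2 ∧ 0 ≤ surplus g (c q.1.1) q.2 ∧
        H (c q.1.1) * surplus g (c q.1.1) q.2 = clip (c q.1.1) q.1.2})
      (h := fun q => H (c q.1.1) * mass g q.2) ?_ (by fun_prop)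
      (fun p => ⟨Y p.1 p.2, hYw _ _, hYt _ _, hYs _ _, hYe _ _⟩) ?_
    · have h1 : Continuous fun q : (ℝ × ℝ) × ℝ => surplus g (c q.1.1) q.2 :=
        hUc.comp (by fun_prop : Continuous fun q : (ℝ × ℝ) × ℝ => (c q.1.1, q.2))
      have h2 : Continuous fun q : (ℝ × ℝ) × ℝ => surplus g (c q.1.1) (c q.1.1) :=
        hUc.comp (by fun_prop : Continuous fun q : (ℝ × ℝ) × ℝ => (c q.1.1, c q.1.1))
      have h3 : Continuous fun q : (ℝ × ℝ) × ℝ => clip (c q.1.1) q.1.2 := by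
        simp only [hclip]
        fun_prop
      simp only [ofPred_and]
      refine (isClosed_le ?_ ?_).inter ((isClosed_le ?_ h1).inter (isClosed_eq ?_ h3)) <;> fun_prop
    · rintro ⟨t, x⟩ y hy ⟨h1, h2, h3⟩
      simp only [hKdef]
      rw [huniq (c t) (hcmem t) (Y t x) y (hYt t x) h1 (hYs t x) h2 ((hYe t x).trans h3.symm)]
  have hKbound : ∀ t x, |K t x| ≤ H T * mass g w := fun t x => by
    have h1 := hHnn _ (hcmem t)
    have h2 := hGnn _ (hYw t x).1
    rw [abs_of_nonneg (mul_nonneg h1 h2)]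
    exact mul_le_mul (hHmono.monotoneOn (hcmem t) ⟨hT.le, le_rfl⟩ (hcmem t).2)
      (hGmono.monotone (hYw t x).2) h2 (hHnn T ⟨hT.le, le_rfl⟩)
  have hKanti : ∀ t, Antitone (K t) := fun t x x' hx => by
    refine mul_le_mul_of_nonneg_left (hGmono.monotone ?_) (hHnn _ (hcmem t))
    refine hcmp (c t) (hcmem t) _ _ (hYt t x) (hYt t x') (hYs t x') ?_
    rw [hYe, hYe]
    exact max_le_max le_rfl (min_le_min hx le_rfl)
  obtain ⟨P, hP0, hP⟩ := exists_solution_of_antitone hT hKc hKbound hKanti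
  set b : ℝ → ℝ := fun t => Y t (P t) with hb
  have hPd : ∀ t ∈ Icc 0 T, HasDerivAt P (H t * mass g (b t)) t := fun t ht => by
    have := hP t ht
    simp only [hKdef, hcid t ht] at this
    exact this
  have hPc : ContinuousOn P (Icc 0 T) := fun t ht => (hPd t ht).continuousAt.continuousWithinAt
  have hbw : ∀ t, b t ∈ Icc 0 w := fun t => hYw _ _
  have hbt : ∀ t ∈ Icc 0 T, t ≤ b t := fun t ht => by
    have := hYt t (P t)
    rwa [hcid t ht] at this
  have hbs : ∀ t ∈ Icc 0 T, 0 ≤ surplus g t (b t) := fun t ht => by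
    have := hYs t (P t)
    rwa [hcid t ht] at this
  have hbe : ∀ t ∈ Icc 0 T, H t * surplus g t (b t) = clip t (P t) := fun t ht => by
    have := hYe t (P t)
    rwa [hcid t ht] at this
  have hPmono : StrictMonoOn P (Icc 0 T) :=
    strictMonoOn_of_deriv_pos (convex_Icc 0 T) hPc fun t ht => by
      rw [interior_Icc] at ht
      have ht' := Ioo_subset_Icc_self ht
      rw [(hPd t ht').deriv]
      exact mul_pos (hHpos t ⟨ht.1, ht.2.le⟩) (hGpos _ (ht.1.trans_le (hbt t ht')))
  have hPpos : ∀ t ∈ Ioc 0 T, 0 < P t := fun t ht => by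
    have := hPmono h0T (Ioc_subset_Icc_self ht) ht.1
    rwa [hP0] at this
  -- `P` stays strictly below the payoff of bidding one's own value
  have hbar : ∀ t ∈ Ioc 0 T, P t < H t * surplus g t t := by
    intro t ht
    by_contra! hge
    set D : ℝ → ℝ := fun s => P s - H s * surplus g s s with hD
    have hsub : Icc 0 t ⊆ Icc 0 T := Icc_subset_Icc_right ht.2
    have hDd : ∀ s ∈ Icc 0 T, HasDerivAt D
        (H s * mass g (b s) - (H' s * surplus g s s + H s * mass g s)) s := fun s hs =>
      (hPd s hs).sub ((hH s).mul (hasDerivAt_surplus_diag hg s))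
    have hDt : 0 ≤ D t := sub_nonneg.2 hge
    have hD0 : D 0 = 0 := by simp [hD, hP0, hH0]
    obtain ⟨z, hz, hz0, hzmax⟩ : ∃ z ∈ Ioc 0 T, 0 ≤ D z ∧ ∀ s ∈ Icc 0 z, D s ≤ D z := by
      obtain ⟨z, hz, hzmax⟩ := isCompact_Icc.exists_isMaxOn (nonempty_Icc.2 ht.1.le)
        (fun s hs => (hDd s (hsub hs)).continuousAt.continuousWithinAt : ContinuousOn D (Icc 0 t))
      have hzt : D t ≤ D z := hzmax ⟨ht.1.le, le_rfl⟩
      rcases hz.1.eq_or_lt with rfl | h0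
      · refine ⟨t, ht, hDt, fun s hs => ?_⟩
        have : D s ≤ D 0 := hzmax hs
        linarith
      · exact ⟨z, ⟨h0, hz.2.trans ht.2⟩, hDt.trans hzt,
          fun s hs => hzmax ⟨hs.1, hs.2.trans hz.2⟩⟩
    have hz' := Ioc_subset_Icc_self hz
    have hbz : b z = z := by
      refine huniq z hz' _ _ (hbt z hz') le_rfl (hbs z hz') (hUdiag z hz.1.le) ?_
      rw [hbe z hz', hclip]
      simp only
      rw [min_eq_right (sub_nonneg.1 hz0), max_eq_right (hRnn z hz')]
    refine false_of_left_max_of_deriv_neg hz.1 (hDd z hz') ?_ hzmax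
    rw [hbz]
    have := mul_pos (hH' z hz) (surplus_diag_pos hg hpos hz.1)
    linarith
  have hPe : ∀ t ∈ Icc 0 T, P t = H t * surplus g t (b t) := by
    intro t ht
    rcases ht.1.eq_or_lt with rfl | h0
    · rw [hP0, hH0, zero_mul]
    · have ht' : t ∈ Ioc 0 T := ⟨h0, ht.2⟩
      rw [hbe t ht, hclip]
      simp only
      rw [min_eq_left (hbar t ht').le, max_eq_right (hPpos t ht').le]
  have hbgt : ∀ t ∈ Ioc 0 T, t < b t := by
    intro t ht
    have ht' := Ioc_subset_Icc_self ht
    refine (hbt t ht').lt_of_ne fun he => (hbar t ht).ne ?_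
    have := hPe t ht'
    rwa [← he] at this
  have hb0 : b 0 = 0 := huniq 0 h0T _ _ (hbt 0 h0T) le_rfl (hbs 0 h0T) (by simp) (by simp [hH0])
  -- the constraint `0 ≤ surplus` makes the bid unique at `0` too, so this includes continuity at `0`
  have hbc : ContinuousOn b (Icc 0 T) := by
    rw [continuousOn_iff_continuous_domRestrict]
    have hPr : Continuous ((Icc 0 T).domRestrict P) := hPc.domRestrict
    refine continuous_of_closed_selection (w := w)
      (R := {q : Icc (0 : ℝ) T × ℝ | (q.1 : ℝ) ≤ q.2 ∧ 0 ≤ surplus g q.1 q.2 ∧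
        (Icc 0 T).domRestrict P q.1 = H q.1 * surplus g q.1 q.2}) (h := Prod.snd) ?_ continuous_snd
      (fun t => ⟨b t, hbw t, hbt t t.2, hbs t t.2, hPe t t.2⟩) ?_
    · have h1 : Continuous fun q : Icc (0 : ℝ) T × ℝ => surplus g q.1 q.2 :=
        hUc.comp (by fun_prop : Continuous fun q : Icc (0 : ℝ) T × ℝ => ((q.1 : ℝ), q.2))
      simp only [ofPred_and]
      refine (isClosed_le ?_ ?_).inter ((isClosed_le ?_ h1).inter (isClosed_eq ?_ ?_)) <;> fun_prop
    · rintro ⟨t, ht⟩ y hy ⟨h1, h2, h3⟩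
      exact huniq t ht _ _ (hbt t ht) h1 (hbs t ht) h2 ((hPe t ht).symm.trans h3)
  have hmvt : ∀ x ∈ Icc 0 T, ∀ y ∈ Icc 0 T, x < y →
      ∃ s ∈ Ioo x y, P y - P x = H s * mass g (b s) * (y - x) := by
    intro x hx y hy hxy
    have hsub : Icc x y ⊆ Icc 0 T := Icc_subset_Icc hx.1 hy.2
    obtain ⟨s, hs, he⟩ := exists_hasDerivAt_eq_slope P (fun s => H s * mass g (b s)) hxy
      (hPc.mono hsub) (fun s hs => hPd s (hsub (Ioo_subset_Icc_self hs)))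
    refine ⟨s, hs, ?_⟩
    rw [he, div_mul_cancel₀ _ (sub_pos.2 hxy).ne']
  have hbmono : StrictMonoOn b (Icc 0 T) := by
    intro x hx y hy hxy
    rcases hx.1.eq_or_lt with rfl | hx0
    · rw [hb0]
      exact hxy.trans (hbgt y ⟨hxy, hy.2⟩)
    by_contra! hle
    have hsub : Icc x y ⊆ Icc 0 T := Icc_subset_Icc hx.1 hy.2
    obtain ⟨z, hz, hzmax⟩ : ∃ z ∈ Ico x y, ∀ s ∈ Icc x y, b s ≤ b z := by
      obtain ⟨z, hz, hzmax⟩ := isCompact_Icc.exists_isMaxOn (nonempty_Icc.2 hxy.le)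
        (hbc.mono hsub)
      rcases hz.2.eq_or_lt with rfl | h
      · exact ⟨x, ⟨le_rfl, hxy⟩, fun s hs => (hzmax hs).trans hle⟩
      · exact ⟨z, ⟨hz.1, h⟩, fun s hs => hzmax hs⟩
    have hzI := hsub (Ico_subset_Icc_self hz)
    have hz0 : 0 < z := hx0.trans_le hz.1
    -- a time just after `z` at which `b z` still exceeds the value
    obtain ⟨s, hzs, hsy, hsb⟩ : ∃ s, z < s ∧ s ≤ y ∧ s ≤ b z :=
      ⟨min y (b z), lt_min hz.2 (hbgt z ⟨hz0, hzI.2⟩), min_le_left _ _, min_le_right _ _⟩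
    have hsxy : s ∈ Icc x y := ⟨hz.1.trans hzs.le, hsy⟩
    have hsI := hsub hsxy
    obtain ⟨r, hr, hPr⟩ := hmvt z hzI s hsI hzs
    have hrxy : r ∈ Icc x y := ⟨hz.1.trans hr.1.le, hr.2.le.trans hsy⟩
    have h1 : H r * mass g (b r) ≤ H s * mass g (b z) :=
      mul_le_mul (hHmono.monotoneOn (hsub hrxy) hsI hr.2.le)
        (hGmono.monotone (hzmax r hrxy)) (hGnn _ (hbw r).1) (hHnn s hsI)
    have h2 : surplus g s (b z) ≤ surplus g s (b s) :=
      (hUanti s).antitoneOn (hbt s hsI) hsb (hzmax s hsxy)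
    rw [surplus_sub hg z s] at h2
    have h3 := mul_le_mul_of_nonneg_left h2 (hHnn s hsI)
    rw [← hPe s hsI] at h3
    have h4 := mul_le_mul_of_nonneg_right h1 (sub_pos.2 hzs).le
    have hPz := hPpos z ⟨hz0, hzI.2⟩
    rw [hPe z hzI] at hPz hPr
    have h5 : 0 < surplus g z (b z) := pos_of_mul_pos_right hPz (hHnn z hzI)
    have h6 := mul_lt_mul_of_pos_right (hHmono hzI hsI hzs) h5
    linarith
  refine ⟨b, hbmono, hbc, hb0, fun v _ => hbw v, hbgt, fun v hv x hx => ?_⟩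
  have hP' : ∀ s ∈ Icc 0 T, ∀ r ∈ Icc 0 T, s ≤ r → H s * mass g (b s) ≤ H r * mass g (b r) :=
    fun s hs r hr hsr => mul_le_mul (hHmono.monotoneOn hs hr hsr)
      (hGmono.monotone (hbmono.monotoneOn hs hr hsr)) (hGnn _ (hbw s).1) (hHnn r hr)
  -- the deviation payoff is the value at `v` of the tangent to the convex function `P` at `x`
  have htan : H x * surplus g v (b x) = P x + H x * mass g (b x) * (v - x) := by
    rw [hPe x hx, surplus_sub hg x v]; ring
  rw [htan, ← hPe v hv]
  rcases lt_trichotomy x v with h | rfl | h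
  · obtain ⟨s, hs, he⟩ := hmvt x hx v hv h
    have := mul_le_mul_of_nonneg_right (hP' x hx s ⟨hx.1.trans hs.1.le, hs.2.le.trans hv.2⟩ hs.1.le)
      (sub_pos.2 h).le
    linarith
  · simp
  · obtain ⟨s, hs, he⟩ := hmvt v hv x hx h
    have := mul_le_mul_of_nonneg_right (hP' s ⟨hv.1.trans hs.1.le, hs.2.le.trans hx.2⟩ x hx hs.2.le)
      (sub_pos.2 h).le
    linarith

/-! ### Existence of the equilibrium -/

/-- The density is continued by its boundary values, so that the payoffs are differentiable
on the whole line. -/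
theorem continuous_extension {g : ℝ → ℝ} {w : ℝ} (hw : 0 < w) (hg : ContinuousOn g (Icc 0 w))
    (hpos : ∀ x ∈ Icc 0 w, 0 < g x) :
    ∃ G : ℝ → ℝ, Continuous G ∧ (∀ x, 0 < G x) ∧ EqOn G g (Icc 0 w) :=
  ⟨IccExtend hw.le ((Icc 0 w).domRestrict g), hg.domRestrict.Icc_extend',
    fun x => hpos _ (projIcc 0 w hw.le x).2, fun x hx => by rw [IccExtend_of_mem _ _ hx]; rfl⟩

theorem integral_congr_Icc {p q : ℝ → ℝ} {w b : ℝ} (h : EqOn p q (Icc 0 w)) (hb : b ∈ Icc 0 w) :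
    ∫ ξ in (0 : ℝ)..b, p ξ = ∫ ξ in (0 : ℝ)..b, q ξ :=
  integral_congr (h.mono (by rw [uIcc_of_le hb.1]; exact Icc_subset_Icc_right hb.2))

/-- (Existence of a symmetric equilibrium of the tournament auction.)
If in addition `g` is continuously differentiable on `[0, w̄]`, then there exists a
strictly increasing continuous `b : [0, v̄] → [0, w̄]` with `b 0 = 0` and `b v > v` on
`(0, v̄]`, such that for every value `v ∈ [0, v̄]` and every bid `β ≥ 0`,
`F(v)^{N−1} ∫₀^{b v} (v−ξ) g ξ dξ ≥ W(β) ∫₀^{min β w̄} (v−ξ) g ξ dξ`, where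
`W (b v') = F(v')^{N−1}` for `v' ∈ [0, v̄]` (i.e. `W β = F(b⁻¹ β)^{N−1}` on `[0, b v̄]`)
and `W β = 1` for `β > b v̄`: bidding `b v` is optimal among all bids when the other
`N−1` first-stage bidders bid according to `b` and the strong bidder bids his value. -/
theorem stmt8
    (wbar vbar : ℝ) (hwbar : 0 < wbar) (hvbar : 0 < vbar)
    (g : ℝ → ℝ)
    (hg_cont : ContinuousOn g (Set.Icc 0 wbar))
    (hg_pos : ∀ x ∈ Set.Icc 0 wbar, 0 < g x)
    (hg_int : (∫ ξ in (0:ℝ)..wbar, g ξ) = 1)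
    (g' : ℝ → ℝ)
    (hg'_cont : ContinuousOn g' (Set.Icc 0 wbar))
    (hg' : ∀ x ∈ Set.Icc 0 wbar, HasDerivWithinAt g (g' x) (Set.Icc 0 wbar) x)
    (f : ℝ → ℝ)
    (hf_cont : ContinuousOn f (Set.Icc 0 vbar))
    (hf_pos : ∀ x ∈ Set.Icc 0 vbar, 0 < f x)
    (hf_int : (∫ ξ in (0:ℝ)..vbar, f ξ) = 1)
    (F : ℝ → ℝ) (hF : ∀ v, F v = ∫ ξ in (0:ℝ)..v, f ξ)
    (N : ℕ) (hN : 2 ≤ N)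
    (hmean : vbar ≤ ∫ ξ in (0:ℝ)..wbar, ξ * g ξ) :
    ∃ b : ℝ → ℝ,
      StrictMonoOn b (Set.Icc 0 vbar) ∧
      ContinuousOn b (Set.Icc 0 vbar) ∧
      b 0 = 0 ∧
      (∀ v ∈ Set.Icc 0 vbar, b v ∈ Set.Icc 0 wbar) ∧
      (∀ v ∈ Set.Ioc 0 vbar, v < b v) ∧
      ∃ W : ℝ → ℝ,
        (∀ v ∈ Set.Icc 0 vbar, W (b v) = F v ^ (N - 1)) ∧
        (∀ β, b vbar < β → W β = 1) ∧
        (∀ v ∈ Set.Icc 0 vbar, ∀ β, 0 ≤ β →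
          W β * ∫ ξ in (0:ℝ)..(min β wbar), (v - ξ) * g ξ ≤
          F v ^ (N - 1) * ∫ ξ in (0:ℝ)..(b v), (v - ξ) * g ξ) := by
  obtain ⟨γ, hγ, hγpos, hγg⟩ := continuous_extension hwbar hg_cont hg_pos
  obtain ⟨φ, hφ, hφpos, hφf⟩ := continuous_extension hvbar hf_cont hf_pos
  have hsurp : ∀ v, ∀ b ∈ Icc 0 wbar, ∫ ξ in (0 : ℝ)..b, (v - ξ) * g ξ = surplus γ v b :=
    fun v b hb => integral_congr_Icc (fun ξ hξ => by simp only [hγg hξ]) hb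
  have hFφ : ∀ v ∈ Icc 0 vbar, F v = mass φ v := fun v hv => by
    rw [hF, mass, integral_congr_Icc hφf hv]
  have hw : wbar ∈ Icc 0 wbar := ⟨hwbar.le, le_rfl⟩
  have hv : vbar ∈ Icc 0 vbar := ⟨hvbar.le, le_rfl⟩
  have hmass1 : mass γ wbar = 1 := by rw [mass, integral_congr_Icc hγg hw, hg_int]
  have hmean' : vbar ≤ mass (fun ξ => ξ * γ ξ) wbar := by
    rw [mass, integral_congr_Icc (q := fun ξ => ξ * g ξ) (fun ξ hξ => by simp only [hγg hξ]) hw]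
    exact hmean
  have hvw : vbar ≤ wbar := by
    have h : mass (fun ξ => ξ * γ ξ) wbar ≤ ∫ ξ in (0 : ℝ)..wbar, wbar * γ ξ :=
      integral_mono_on hwbar.le ((by fun_prop : Continuous _).intervalIntegrable _ _)
        ((by fun_prop : Continuous _).intervalIntegrable _ _)
        fun ξ hξ => mul_le_mul_of_nonneg_right hξ.2 (hγpos ξ).le
    rw [intervalIntegral.integral_const_mul] at h
    change _ ≤ wbar * mass γ wbar at h
    rw [hmass1, mul_one] at h
    exact hmean'.trans h
  obtain ⟨b, hbmono, hbc, hb0, hbw, hbgt, hopt⟩ := exists_equilibrium_bid hvbar hvw hγ hγpos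
    (fun t ht => by rw [surplus_eq hγ, hmass1]; linarith [ht.2])
    (H := fun t => mass φ t ^ (N - 1))
    (H' := fun t => ((N - 1 : ℕ) : ℝ) * mass φ t ^ (N - 1 - 1) * φ t)
    (fun t => (hasDerivAt_mass hφ t).pow (N - 1))
    (by simp; omega)
    (fun t ht => by
      have h1 : 0 < mass φ t := by simpa using strictMono_mass hφ hφpos ht.1
      have h2 : (0 : ℝ) < ((N - 1 : ℕ) : ℝ) := by exact_mod_cast (by omega : 0 < N - 1)
      have := hφpos t
      positivity)
  have hWinv := hbmono.injOn.leftInvOn_invFunOn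
  have hle : ∀ x ∈ Icc 0 vbar, b x ≤ b vbar := fun x hx => hbmono.monotoneOn hx hv hx.2
  set W : ℝ → ℝ := fun β =>
    if β ≤ b vbar then F (Function.invFunOn b (Icc 0 vbar) β) ^ (N - 1) else 1 with hW
  have hWb : ∀ x ∈ Icc 0 vbar, W (b x) = F x ^ (N - 1) := fun x hx => by
    simp only [hW]
    rw [if_pos (hle x hx), hWinv hx]
  have hW1 : ∀ β, b vbar < β → W β = 1 := fun β hβ => if_neg hβ.not_ge
  refine ⟨b, hbmono, hbc, hb0, hbw, hbgt, W, hWb, hW1, fun v hv' β hβ => ?_⟩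
  rw [hsurp v _ (hbw v hv'), hsurp v _ ⟨le_min hβ hwbar.le, min_le_right _ _⟩, hFφ v hv']
  rcases le_or_gt β (b vbar) with h | h
  · obtain ⟨x, hx, rfl⟩ := intermediate_value_Icc hvbar.le hbc (show β ∈ Icc (b 0) (b vbar) from
      ⟨by rw [hb0]; exact hβ, h⟩)
    rw [min_eq_left (hbw x hx).2, hWb x hx, hFφ x hx]
    exact hopt v hv' x hx
  · -- overbidding the top bid wins with the same probability, at a larger expected price
    have hFv : mass φ vbar = 1 := by rw [← hFφ vbar hv, hF, hf_int]
    have hb1 : b vbar ≤ min β wbar := le_min h.le (hbw vbar hv).2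
    have hb2 : v ≤ b vbar := hv'.2.trans (hbgt vbar ⟨hvbar, le_rfl⟩).le
    have h1 := (surplus_strictAntiOn hγ hγpos v).antitoneOn hb2 (hb2.trans hb1) hb1
    have h2 := hopt v hv' vbar hv
    simp only [hFv, one_pow, one_mul] at h2
    rw [hW1 β h, one_mul]
    exact h1.trans h2
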